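/- Let E = {ξ ∈ ℝ^{2×2} : (λ_1(ξ), λ_2(ξ)) ∈ Λ_E, det ξ ≥ 0}, where Λ_E is a compact subset of {(x_1, x_2) ∈ ℝ² : 0 ≤ x_1 ≤ x_2} such that R(Λ_E) is connected. Then Rco_f E = {ξ ∈ ℝ^{2×2} : (λ_1(ξ), λ_2(ξ)) ∈ R(Λ_E), det ξ ≥ 0}. -/

import Mathlib

open MeasureTheory Filter

attribute [local instance] Classical.propDecidable
attribute [local instance] Matrix.frobeniusNormedAddCommGroup Matrix.frobeniusNormedSpace

noncomputable section

/-- The space of real `N × n` matrices. -/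
abbrev Mat (N n : ℕ) : Type := Matrix (Fin N) (Fin n) ℝ

/-- A function `f : ℝ^{N×n} → ℝ` is rank one convex. -/
def RankOneConvexFun {N n : ℕ} (f : Mat N n → ℝ) : Prop :=
  ∀ lam ∈ Set.Icc (0:ℝ) 1, ∀ ξ η : Mat N n, (ξ - η).rank = 1 →
    f (lam • ξ + (1 - lam) • η) ≤ lam * f ξ + (1 - lam) * f η

/-- The hull `Rco_f E`. -/
def RcoF {N n : ℕ} (E : Set (Mat N n)) : Set (Mat N n) :=
  {ξ | ∀ f : Mat N n → ℝ, RankOneConvexFun f → (∀ η ∈ E, f η ≤ 0) → f ξ ≤ 0}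

/-- A set of matrices is rank one convex. -/
def RankOneConvexSet {N n : ℕ} (S : Set (Mat N n)) : Prop :=
  ∀ A ∈ S, ∀ B ∈ S, (A - B).rank = 1 → ∀ t ∈ Set.Icc (0:ℝ) 1, t • A + (1 - t) • B ∈ S

/-- The property `(H_I(U))`, phrased on lists of (weight, matrix) pairs. -/
inductive HIProp {N n : ℕ} (U : Set (Mat N n)) : List (ℝ × Mat N n) → Prop where
  | single (l : ℝ) (ξ : Mat N n) (hξ : ξ ∈ U) : HIProp U [(l, ξ)]
  | pair (l₁ l₂ : ℝ) (ξ₁ ξ₂ : Mat N n) (h₁ : ξ₁ ∈ U) (h₂ : ξ₂ ∈ U)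
      (hrank : (ξ₁ - ξ₂).rank = 1) : HIProp U [(l₁, ξ₁), (l₂, ξ₂)]
  | step (L rest : List (ℝ × Mat N n)) (l₁ l₂ : ℝ) (ξ₁ ξ₂ : Mat N n)
      (hperm : L.Perm ((l₁, ξ₁) :: (l₂, ξ₂) :: rest)) (hrest : rest ≠ [])
      (h₁ : ξ₁ ∈ U) (h₂ : ξ₂ ∈ U) (hrank : (ξ₁ - ξ₂).rank = 1)
      (hrec : HIProp U ((l₁ + l₂, ((l₁ + l₂)⁻¹) • (l₁ • ξ₁ + l₂ • ξ₂)) :: rest)) :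
      HIProp U L

/-- The family `(λ_i, ξ_i)_{1 ≤ i ≤ I}` satisfies `(H_I(U))`. -/
def SatisfiesH {N n : ℕ} (U : Set (Mat N n)) (I : ℕ) (l : Fin I → ℝ)
    (ξ : Fin I → Mat N n) : Prop :=
  HIProp U (List.ofFn fun i => (l i, ξ i))

/-- The gradient of a map `u : ℝ^n → ℝ^N`, as an `N × n` matrix. -/
def matGrad {N n : ℕ} (u : (Fin n → ℝ) → Fin N → ℝ) (x : Fin n → ℝ) : Mat N n :=
  LinearMap.toMatrix' (fderiv ℝ u x).toLinearMap

/-- `u` is affine on the set `s`. -/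
def AffineOn {N n : ℕ} (u : (Fin n → ℝ) → Fin N → ℝ) (s : Set (Fin n → ℝ)) : Prop :=
  ∃ (A : Mat N n) (b : Fin N → ℝ), ∀ x ∈ s, u x = A.mulVec x + b

/-- `u` is piecewise affine on the open set `Ω`. -/
def PiecewiseAffineOn {N n : ℕ} (u : (Fin n → ℝ) → Fin N → ℝ)
    (Ω : Set (Fin n → ℝ)) : Prop :=
  ContinuousOn u (closure Ω) ∧
  ∃ P : ℕ → Set (Fin n → ℝ),
    (∀ k, IsOpen (P k)) ∧ (∀ k, P k ⊆ Ω) ∧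
    (∀ k l, k ≠ l → Disjoint (P k) (P l)) ∧
    volume (Ω \ ⋃ k, P k) = 0 ∧ ∀ k, AffineOn u (P k)

/-- `u` is piecewise `C¹` on the open set `Ω`. -/
def PiecewiseC1On {N n : ℕ} (u : (Fin n → ℝ) → Fin N → ℝ)
    (Ω : Set (Fin n → ℝ)) : Prop :=
  ContinuousOn u (closure Ω) ∧
  ∃ P : ℕ → Set (Fin n → ℝ),
    (∀ k, IsOpen (P k)) ∧ (∀ k, P k ⊆ Ω) ∧
    (∀ k l, k ≠ l → Disjoint (P k) (P l)) ∧
    volume (Ω \ ⋃ k, P k) = 0 ∧ ∀ k, ContDiffOn ℝ 1 u (P k)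

/-- `u ∈ φ + W₀^{1,∞}(Ω; ℝ^N)`: `u` is Lipschitz on `closure Ω` and agrees with `φ`
on the boundary of `Ω`. -/
def MemW01inf {N n : ℕ} (Ω : Set (Fin n → ℝ)) (φ u : (Fin n → ℝ) → Fin N → ℝ) : Prop :=
  (∃ C : NNReal, LipschitzOnWith C u (closure Ω)) ∧ ∀ x ∈ frontier Ω, u x = φ x

/-- `K` has the relaxation property with respect to `E`. -/
def HasRelaxationProperty {N n : ℕ} (K E : Set (Mat N n)) : Prop :=
  ∀ Ω : Set (Fin n → ℝ), IsOpen Ω → Bornology.IsBounded Ω →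
    ∀ ξ ∈ K, ∀ b : Fin N → ℝ,
      ∃ u : ℕ → (Fin n → ℝ) → Fin N → ℝ,
        (∀ ν, PiecewiseAffineOn (u ν) Ω) ∧
        (∀ ν, MemW01inf Ω (fun x => ξ.mulVec x + b) (u ν)) ∧
        (∀ ν, ∀ᵐ x ∂(volume.restrict Ω), matGrad (u ν) x ∈ E ∪ K) ∧
        (∃ C : NNReal, ∀ ν, LipschitzOnWith C (u ν) (closure Ω)) ∧
        TendstoUniformlyOn u (fun x => ξ.mulVec x + b) atTop (closure Ω) ∧
        Tendsto (fun ν => ∫ x in Ω, Metric.infDist (matGrad (u ν) x) E) atTop (nhds 0)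

/-- The singular values of a square matrix, in nondecreasing order:
the square roots of the eigenvalues of `ξ ξᵀ`, sorted. -/
def singularValues {n : ℕ} (ξ : Matrix (Fin n) (Fin n) ℝ) (i : Fin n) : ℝ :=
  Real.sqrt ((Matrix.isHermitian_mul_conjTranspose_self ξ).eigenvalues
    (Tuple.sort (Matrix.isHermitian_mul_conjTranspose_self ξ).eigenvalues i))

end

section Statements

open Metric Set

/-!
Identify `ℝ²` with `ℂ` and write a matrix as `ζ ↦ z * ζ + w * conj ζ`. Then `det = |z|² - |w|²`, the
singular values are `||z| - |w||` and `|z| + |w|`, and two matrices differ by a matrix of rank at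
most one iff the increments of `z` and `w` have equal modulus.

The reduced set of the hull of `E` (its diagonal matrices `diag(x₁, x₂)` with `0 ≤ x₁ ≤ x₂`) is a
competitor in the definition of `R = R(Λ_E)`. It is closed because a rank one convex function is
convex, hence continuous, in each diagonal entry, and convexity in one variable upgrades this to
joint continuity; it is bounded because `2|z|` is convex and bounds the singular values. So `R` lies
in it.

Conversely, a point `(x, y)` outside `R` is separated from the hull by one of the polyconvex
functions `2|w| + k det` and `2|z| + k det`. A slope `k` fails for the first one only if a chord of
the curve `p ↦ (p₁p₂, p₂ - p₁)` over `R` passes above `(xy, y - x)`, and for the second one only if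
a chord of `p ↦ (p₁p₂, p₁ + p₂)` passes above `(xy, x + y)`. When the ends of the chord can be
rotated into rank one position, the segment between them lies in the isotropic set of `R`, and
moving at constant determinant from there to smaller `|w|` gives `(x, y) ∈ R`, a contradiction. This
is possible in the first case if `[p₁, p₂]` and `[q₁, q₂]` are nested, and in the second if they
interlace. In the other positions the chord can only pass above under conditions on `(x, y)` which,
`R` being connected, cannot hold for both functions.
-/

section Rank

variable {ι κ K : Type*} [Fintype κ] [Field K]

theorem matrix_eq_zero_of_rank_eq_zero {A : Matrix ι κ K} (hA : A.rank = 0) : A = 0 := by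
  have hrange : LinearMap.range A.mulVecLin = ⊥ := Submodule.finrank_eq_zero.mp hA
  exact Matrix.mulVec_injective <| funext fun v ↦ by
    simpa using LinearMap.congr_fun (LinearMap.range_eq_bot.mp hrange) v

theorem rank_smul_le (c : K) (A : Matrix ι κ K) : (c • A).rank ≤ A.rank := by
  simpa using Matrix.rank_mul_le_left A (c • (1 : Matrix κ κ K))

theorem rank_eq_card_iff_det_ne_zero [DecidableEq κ] {A : Matrix κ κ K} :
    A.rank = Fintype.card κ ↔ A.det ≠ 0 := by
  refine ⟨fun hrank ↦ ?_, Matrix.rank_of_det_ne_zero⟩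
  have htop : LinearMap.range A.mulVecLin = ⊤ :=
    Submodule.eq_top_of_finrank_eq (hrank.trans (Module.finrank_fintype_fun_eq_card K).symm)
  have hA : IsUnit A := Matrix.mulVec_surjective_iff_isUnit.mp (LinearMap.range_eq_top.mp htop)
  exact ((Matrix.isUnit_iff_isUnit_det A).mp hA).ne_zero

theorem rank_le_one_iff_det_eq_zero {A : Matrix (Fin 2) (Fin 2) K} : A.rank ≤ 1 ↔ A.det = 0 := by
  have hle := A.rank_le_card_width
  have hiff := (rank_eq_card_iff_det_ne_zero (A := A)).not_left
  rw [← hiff]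
  simp only [Fintype.card_fin] at hle ⊢
  omega

end Rank

section RankOne

variable {N n N' n' : ℕ}

theorem RankOneConvexSet.combo_mem {S : Set (Mat N n)} (hS : RankOneConvexSet S) {A B : Mat N n}
    (hA : A ∈ S) (hB : B ∈ S) (hAB : (A - B).rank ≤ 1) {t : ℝ} (ht : t ∈ Icc (0 : ℝ) 1) :
    t • A + (1 - t) • B ∈ S := by
  rcases hAB.eq_or_lt with hrank | hrank
  · exact hS A hA B hB hrank t ht
  · rwa [sub_eq_zero.mp (matrix_eq_zero_of_rank_eq_zero (Nat.lt_one_iff.mp hrank)), ← add_smul,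
      add_sub_cancel, one_smul]

theorem RankOneConvexFun.combo_le {f : Mat N n → ℝ} (hf : RankOneConvexFun f) {A B : Mat N n}
    (hAB : (A - B).rank ≤ 1) {t : ℝ} (ht : t ∈ Icc (0 : ℝ) 1) :
    f (t • A + (1 - t) • B) ≤ t * f A + (1 - t) * f B := by
  rcases hAB.eq_or_lt with hrank | hrank
  · exact hf t ht A B hrank
  · rw [sub_eq_zero.mp (matrix_eq_zero_of_rank_eq_zero (Nat.lt_one_iff.mp hrank)), ← add_smul,
      ← add_mul, add_sub_cancel, one_smul, one_mul]

theorem rank_add_smul_sub_add_smul_le_one (A : Mat N n) {B : Mat N n} (hB : B.rank ≤ 1) (s t : ℝ) :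
    (A + s • B - (A + t • B)).rank ≤ 1 := by
  rw [add_sub_add_left_eq_sub, ← sub_smul]
  exact (rank_smul_le _ B).trans hB

theorem add_combo_smul (A B : Mat N n) {a b : ℝ} (hab : a + b = 1) (s t : ℝ) :
    A + (a • s + b • t) • B = a • (A + s • B) + (1 - a) • (A + t • B) := by
  obtain rfl : b = 1 - a := by linarith
  simp only [smul_eq_mul]
  module

theorem RankOneConvexSet.convex_setOf_add_smul_mem {S : Set (Mat N n)} (hS : RankOneConvexSet S)
    (A : Mat N n) {B : Mat N n} (hB : B.rank ≤ 1) : Convex ℝ {t : ℝ | A + t • B ∈ S} := by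
  intro s hs t ht a b ha hb hab
  rw [mem_ofPred_eq, add_combo_smul A B hab]
  exact hS.combo_mem hs ht (rank_add_smul_sub_add_smul_le_one A hB s t) ⟨ha, by linarith⟩

theorem RankOneConvexFun.convexOn_add_smul {f : Mat N n → ℝ} (hf : RankOneConvexFun f)
    (A : Mat N n) {B : Mat N n} (hB : B.rank ≤ 1) :
    ConvexOn ℝ univ fun t : ℝ ↦ f (A + t • B) := by
  refine ⟨convex_univ, fun s _ t _ a b ha hb hab ↦ ?_⟩
  beta_reduce
  rw [add_combo_smul A B hab]
  obtain rfl : b = 1 - a := by linarith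
  exact hf.combo_le (rank_add_smul_sub_add_smul_le_one A hB s t) ⟨ha, by linarith⟩

theorem rankOneConvexFun_of_convexOn {f : Mat N n → ℝ} (hf : ConvexOn ℝ univ f) :
    RankOneConvexFun f := fun t ht _ _ _ ↦
  hf.2 (mem_univ _) (mem_univ _) ht.1 (sub_nonneg.mpr ht.2) (add_sub_cancel t 1)

theorem RankOneConvexFun.add {f g : Mat N n → ℝ} (hf : RankOneConvexFun f)
    (hg : RankOneConvexFun g) : RankOneConvexFun (f + g) := fun t ht A B hAB ↦ by
  have hfAB := hf t ht A B hAB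
  have hgAB := hg t ht A B hAB
  simp only [Pi.add_apply]
  linarith

theorem subset_rcoF (E : Set (Mat N n)) : E ⊆ RcoF E := fun ξ hξ _ _ hfE ↦ hfE ξ hξ

theorem rcoF_mono {E F : Set (Mat N n)} (hEF : E ⊆ F) : RcoF E ⊆ RcoF F := fun _ hξ f hf hfF ↦
  hξ f hf fun η hη ↦ hfF η (hEF hη)

theorem rankOneConvexSet_rcoF (E : Set (Mat N n)) : RankOneConvexSet (RcoF E) :=
  fun A hA B hB hAB t ht f hf hfE ↦ (hf t ht A B hAB).trans <|
    add_nonpos (mul_nonpos_of_nonneg_of_nonpos ht.1 (hA f hf hfE))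
      (mul_nonpos_of_nonneg_of_nonpos (sub_nonneg.mpr ht.2) (hB f hf hfE))

theorem RankOneConvexFun.le_of_mem_rcoF {f : Mat N n → ℝ} (hf : RankOneConvexFun f)
    {E : Set (Mat N n)} {c : ℝ} (hE : ∀ η ∈ E, f η ≤ c) {ξ : Mat N n} (hξ : ξ ∈ RcoF E) :
    f ξ ≤ c := by
  have hfc : RankOneConvexFun (f + fun _ ↦ -c) :=
    hf.add (rankOneConvexFun_of_convexOn (convexOn_const _ convex_univ))
  exact sub_nonpos.mp (hξ _ hfc fun η hη ↦ sub_nonpos.mpr (hE η hη))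

theorem mapsTo_rcoF {T : Mat N n →ₗ[ℝ] Mat N' n'} (hT : ∀ A, A.rank ≤ 1 → (T A).rank ≤ 1)
    {E : Set (Mat N n)} {E' : Set (Mat N' n')} (hE : MapsTo T E E') :
    MapsTo T (RcoF E) (RcoF E') := by
  intro ξ hξ f hf hfE'
  refine hξ (f ∘ T) (fun t ht A B hAB ↦ ?_) fun η hη ↦ hfE' _ (hE hη)
  have hTAB : (T A - T B).rank ≤ 1 := by
    rw [← map_sub]
    exact hT _ hAB.le
  simpa only [Function.comp_apply, map_add, map_smul] using hf.combo_le hTAB ht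

end RankOne

section TwoByTwo

theorem det_combo {A B : Mat 2 2} (h : (A - B).det = 0) (t : ℝ) :
    (t • A + (1 - t) • B).det = t * A.det + (1 - t) * B.det := by
  simp only [Matrix.det_fin_two, Matrix.sub_apply, Matrix.add_apply, Matrix.smul_apply,
    smul_eq_mul] at h ⊢
  linear_combination (t ^ 2 - t) * h

theorem rankOneConvexFun_const_mul_det (k : ℝ) :
    RankOneConvexFun fun ξ : Mat 2 2 ↦ k * ξ.det := fun t _ A B hAB ↦ by
  beta_reduce
  rw [det_combo (rank_le_one_iff_det_eq_zero.mp hAB.le)]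
  linarith

theorem rankOneConvexFun_norm_add_const_mul_det {F : Type*} [SeminormedAddCommGroup F]
    [NormedSpace ℝ F] (T : Mat 2 2 →ₗ[ℝ] F) (k : ℝ) :
    RankOneConvexFun fun ξ : Mat 2 2 ↦ ‖T ξ‖ + k * ξ.det :=
  (rankOneConvexFun_of_convexOn (convexOn_univ_norm.comp_linearMap T)).add
    (rankOneConvexFun_const_mul_det k)

theorem diagonal_eq_add_smul_left (x y : ℝ) :
    Matrix.diagonal ![x, y] = Matrix.diagonal ![0, y] + x • Matrix.diagonal ![1, 0] := by
  ext i j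
  fin_cases i <;> fin_cases j <;> simp

theorem diagonal_eq_add_smul_right (x y : ℝ) :
    Matrix.diagonal ![x, y] = Matrix.diagonal ![x, 0] + y • Matrix.diagonal ![0, 1] := by
  ext i j
  fin_cases i <;> fin_cases j <;> simp

theorem RankOneConvexSet.convex_setOf_diagonal_mem_left {S : Set (Mat 2 2)}
    (hS : RankOneConvexSet S) (y : ℝ) : Convex ℝ {x : ℝ | Matrix.diagonal ![x, y] ∈ S} := by
  have hrank : (Matrix.diagonal ![1, 0] : Mat 2 2).rank ≤ 1 :=
    rank_le_one_iff_det_eq_zero.mpr (by simp)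
  simpa only [← diagonal_eq_add_smul_left] using
    hS.convex_setOf_add_smul_mem (Matrix.diagonal ![0, y]) hrank

theorem RankOneConvexSet.convex_setOf_diagonal_mem_right {S : Set (Mat 2 2)}
    (hS : RankOneConvexSet S) (x : ℝ) : Convex ℝ {y : ℝ | Matrix.diagonal ![x, y] ∈ S} := by
  have hrank : (Matrix.diagonal ![0, 1] : Mat 2 2).rank ≤ 1 :=
    rank_le_one_iff_det_eq_zero.mpr (by simp)
  simpa only [← diagonal_eq_add_smul_right] using
    hS.convex_setOf_add_smul_mem (Matrix.diagonal ![x, 0]) hrank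

theorem RankOneConvexFun.convexOn_diagonal_left {f : Mat 2 2 → ℝ} (hf : RankOneConvexFun f)
    (y : ℝ) : ConvexOn ℝ univ fun x : ℝ ↦ f (Matrix.diagonal ![x, y]) := by
  have hrank : (Matrix.diagonal ![1, 0] : Mat 2 2).rank ≤ 1 :=
    rank_le_one_iff_det_eq_zero.mpr (by simp)
  simpa only [← diagonal_eq_add_smul_left] using
    hf.convexOn_add_smul (Matrix.diagonal ![0, y]) hrank

theorem RankOneConvexFun.convexOn_diagonal_right {f : Mat 2 2 → ℝ} (hf : RankOneConvexFun f)
    (x : ℝ) : ConvexOn ℝ univ fun y : ℝ ↦ f (Matrix.diagonal ![x, y]) := by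
  have hrank : (Matrix.diagonal ![0, 1] : Mat 2 2).rank ≤ 1 :=
    rank_le_one_iff_det_eq_zero.mpr (by simp)
  simpa only [← diagonal_eq_add_smul_right] using
    hf.convexOn_add_smul (Matrix.diagonal ![x, 0]) hrank

theorem det_nonneg_of_mem_rcoF {E : Set (Mat 2 2)} (hE : ∀ η ∈ E, 0 ≤ η.det) {ξ : Mat 2 2}
    (hξ : ξ ∈ RcoF E) : 0 ≤ ξ.det := by
  have := hξ _ (rankOneConvexFun_const_mul_det (-1)) fun η hη ↦ by linarith [hE η hη]
  linarith

end TwoByTwo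

section Separation

theorem isOpen_setOf_forall_lt {X Y : Type*} [TopologicalSpace X] [TopologicalSpace Y]
    {S : Set Y} (hS : IsCompact S) {f g : X → Y → ℝ} (hf : Continuous f.uncurry)
    (hg : Continuous g.uncurry) : IsOpen {x | ∀ y ∈ S, f x y < g x y} := by
  refine isOpen_iff_eventually.mpr fun x hx ↦ ?_
  exact hS.eventually_forall_of_forall_eventually fun y hy ↦
    hf.continuousAt.eventually_lt hg.continuousAt (hx y hy)

section Slope

variable {X : Type*} [TopologicalSpace X] {S : Set X} {D b : X → ℝ} {D₀ b₀ : ℝ}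

theorem exists_nat_forall_lt_mul_abs (hS : IsCompact S) (hD : Continuous D) (hb : Continuous b)
    (hvert : ∀ p ∈ S, D p = D₀ → b p < b₀) : ∃ n : ℕ, ∀ p ∈ S, b p < b₀ + n * |D p - D₀| := by
  let U : ℕ → Set X := fun n ↦ {p | b p < b₀ + n * |D p - D₀|}
  have hU : ∀ n, IsOpen (U n) := fun n ↦ isOpen_lt (by fun_prop) (by fun_prop)
  have hmono : Monotone U := fun m n hmn p (hp : b p < _) ↦ hp.trans_le (by gcongr)
  refine hS.elim_directed_cover U hU (fun p hp ↦ mem_iUnion.mpr ?_) hmono.directed_le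
  by_cases hpD : D p = D₀
  · exact ⟨0, by simpa [U] using hvert p hp hpD⟩
  · have hpos : 0 < |D p - D₀| := abs_pos.mpr (sub_ne_zero.mpr hpD)
    obtain ⟨n, hn⟩ := exists_nat_gt ((b p - b₀) / |D p - D₀|)
    exact ⟨n, by simpa [U, sub_lt_iff_lt_add'] using (div_lt_iff₀ hpos).mp hn⟩

theorem exists_combo_eq {r s m : ℝ} (hrm : r < m) (hms : m < s) :
    ∃ t ∈ Icc (0 : ℝ) 1, (1 - t) * r + t * s = m := by
  have hrs : 0 < s - r := by linarith
  refine ⟨(m - r) / (s - r), ⟨by bound, (div_le_one hrs).mpr (by linarith)⟩, ?_⟩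
  field_simp
  ring

-- The slopes that work to the right of `D₀` and those that work to its left form two nonempty open
-- sets covering `ℝ`, so they meet.
theorem exists_slope_forall_lt (hS : IsCompact S) (hD : Continuous D) (hb : Continuous b)
    (hvert : ∀ p ∈ S, D p = D₀ → b p < b₀)
    (hchord : ∀ p ∈ S, ∀ q ∈ S, D p < D₀ → D₀ < D q → ∀ t ∈ Icc (0 : ℝ) 1,
      (1 - t) * D p + t * D q = D₀ → (1 - t) * b p + t * b q < b₀) :
    ∃ k : ℝ, ∀ p ∈ S, b p < b₀ + k * (D p - D₀) := by
  let U : Set ℝ := {k | ∀ p ∈ S ∩ {p | D₀ ≤ D p}, b p < b₀ + k * (D p - D₀)}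
  let V : Set ℝ := {k | ∀ p ∈ S ∩ {p | D p ≤ D₀}, b p < b₀ + k * (D p - D₀)}
  have hU : IsOpen U := isOpen_setOf_forall_lt
    (hS.inter_right (isClosed_le (by fun_prop) (by fun_prop))) (by fun_prop) (by fun_prop)
  have hV : IsOpen V := isOpen_setOf_forall_lt
    (hS.inter_right (isClosed_le (by fun_prop) (by fun_prop))) (by fun_prop) (by fun_prop)
  obtain ⟨n, hn⟩ := exists_nat_forall_lt_mul_abs hS hD hb hvert
  have hnU : (n : ℝ) ∈ U := fun p ⟨hp, (hpD : D₀ ≤ D p)⟩ ↦ by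
    simpa only [abs_of_nonneg (sub_nonneg.mpr hpD)] using hn p hp
  have hnV : -(n : ℝ) ∈ V := fun p ⟨hp, (hpD : D p ≤ D₀)⟩ ↦ by
    simpa only [abs_of_nonpos (sub_nonpos.mpr hpD), mul_neg, neg_mul] using hn p hp
  have hUV : univ ⊆ U ∪ V := by
    intro k _
    by_contra! hk
    simp only [U, V, mem_union, mem_ofPred_eq, not_or, not_forall, not_lt, mem_inter_iff] at hk
    obtain ⟨⟨q, ⟨hq, hqD⟩, hkq⟩, ⟨p, ⟨hp, hpD⟩, hkp⟩⟩ := hk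
    have hqD : D₀ < D q := hqD.lt_of_ne' fun h ↦ (hvert q hq h).not_ge (by simpa [h] using hkq)
    have hpD : D p < D₀ := hpD.lt_of_ne fun h ↦ (hvert p hp h).not_ge (by simpa [h] using hkp)
    obtain ⟨t, ht, htD⟩ := exists_combo_eq hpD hqD
    refine (hchord p hp q hq hpD hqD t ht htD).not_ge ?_
    calc b₀ = (1 - t) * (b₀ + k * (D p - D₀)) + t * (b₀ + k * (D q - D₀)) := by
          linear_combination k * -htD
      _ ≤ (1 - t) * b p + t * b q := by
          gcongr
          · linarith [ht.2]
          · exact ht.1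
  obtain ⟨k, -, hkU, hkV⟩ := isPreconnected_univ U V hU hV hUV ⟨n, trivial, hnU⟩ ⟨-n, trivial, hnV⟩
  exact ⟨k, fun p hp ↦ (le_total D₀ (D p)).elim (fun h ↦ hkU p ⟨hp, h⟩) fun h ↦ hkV p ⟨hp, h⟩⟩

end Slope

theorem combo_lt_of_le_affine {u l c D₁ D₂ D b₁ b₂ b t : ℝ} (hu : 0 < u) (ht : t ∈ Icc (0 : ℝ) 1)
    (h₁ : u * b₁ ≤ l * D₁ + c) (h₂ : u * b₂ ≤ l * D₂ + c) (h : l * D + c < u * b)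
    (hD : (1 - t) * D₁ + t * D₂ = D) : (1 - t) * b₁ + t * b₂ < b := by
  have ht' : 0 ≤ 1 - t := sub_nonneg.mpr ht.2
  refine lt_of_mul_lt_mul_left ?_ hu.le
  calc u * ((1 - t) * b₁ + t * b₂) = (1 - t) * (u * b₁) + t * (u * b₂) := by ring
    _ ≤ (1 - t) * (l * D₁ + c) + t * (l * D₂ + c) := by
        gcongr
        exact ht.1
    _ = l * D + c := by linear_combination l * hD
    _ < u * b := h

end Separation

section SeparateContinuity

theorem abs_sub_le_mul_max_of_convexOn {F : Type*} [AddCommGroup F] [Module ℝ F] {h : F → ℝ}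
    (hh : ConvexOn ℝ univ h) (x v : F) {t : ℝ} (ht : t ∈ Icc (0 : ℝ) 1) :
    |h (x + t • v) - h x| ≤ t * max (h (x + v) - h x) (h (x - v) - h x) := by
  obtain ⟨ht₀, ht₁⟩ := ht
  have hupper : h (x + t • v) ≤ (1 - t) * h x + t * h (x + v) := by
    have hx : x + t • v = (1 - t) • x + t • (x + v) := by module
    rw [hx]
    exact hh.2 (mem_univ x) (mem_univ (x + v)) (sub_nonneg.mpr ht₁) ht₀ (by ring)
  have hlower : (1 + t) * h x ≤ h (x + t • v) + t * h (x - v) := by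
    have hpos : 0 < 1 + t := by linarith
    have hx : x = (1 / (1 + t)) • (x + t • v) + (t / (1 + t)) • (x - v) := by
      match_scalars <;> field_simp; ring
    have hconv := hh.2 (mem_univ (x + t • v)) (mem_univ (x - v)) (by positivity : 0 ≤ 1 / (1 + t))
      (by positivity : 0 ≤ t / (1 + t)) (by field_simp)
    rw [← hx] at hconv
    simp only [smul_eq_mul] at hconv
    field_simp at hconv
    linarith
  have hmax₁ := mul_le_mul_of_nonneg_left (le_max_left (h (x + v) - h x) (h (x - v) - h x)) ht₀
  have hmax₂ := mul_le_mul_of_nonneg_left (le_max_right (h (x + v) - h x) (h (x - v) - h x)) ht₀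
  rw [abs_le]
  constructor <;> linarith

theorem abs_sub_le_abs_mul_max_of_convexOn {h : ℝ → ℝ} (hh : ConvexOn ℝ univ h) {x x' : ℝ}
    (hx : |x' - x| ≤ 1) : |h x' - h x| ≤ |x' - x| * max (h (x + 1) - h x) (h (x - 1) - h x) := by
  rcases abs_cases (x' - x) with ⟨habs, -⟩ | ⟨habs, -⟩
  · have := abs_sub_le_mul_max_of_convexOn hh x 1 ⟨abs_nonneg (x' - x), hx⟩
    rwa [habs, smul_eq_mul, mul_one, add_sub_cancel, ← habs] at this
  · have := abs_sub_le_mul_max_of_convexOn hh x (-1) ⟨abs_nonneg (x' - x), hx⟩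
    rwa [habs, smul_neg, smul_eq_mul, mul_one, neg_neg, add_sub_cancel, ← habs, max_comm,
      sub_neg_eq_add, ← sub_eq_add_neg] at this

theorem continuous_uncurry_of_convexOn_of_continuous {Y : Type*} [TopologicalSpace Y]
    {g : ℝ → Y → ℝ} (hconv : ∀ y, ConvexOn ℝ univ (g · y)) (hcont : ∀ x, Continuous (g x)) :
    Continuous g.uncurry := by
  refine continuous_iff_continuousAt.mpr fun ⟨x, y⟩ ↦ ?_
  let M : Y → ℝ := fun y' ↦ max (g (x + 1) y' - g x y') (g (x - 1) y' - g x y')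
  have hM : Continuous M := by fun_prop
  have hbound : ∀ᶠ p : ℝ × Y in nhds (x, y), ‖g p.1 p.2 - g x p.2‖ ≤ |p.1 - x| * M p.2 := by
    have hnear : ∀ᶠ p : ℝ × Y in nhds (x, y), |p.1 - x| < 1 :=
      (isOpen_lt (f := fun p : ℝ × Y ↦ |p.1 - x|) (by fun_prop) continuous_const).mem_nhds
        (by simp)
    filter_upwards [hnear] with p hp using abs_sub_le_abs_mul_max_of_convexOn (hconv p.2) hp.le
  have hzero : Tendsto (fun p : ℝ × Y ↦ |p.1 - x| * M p.2) (nhds (x, y)) (nhds 0) := by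
    have : Continuous fun p : ℝ × Y ↦ |p.1 - x| * M p.2 := by fun_prop
    simpa using this.tendsto (x, y)
  have hdiff := squeeze_zero_norm' hbound hzero
  have hsnd : Tendsto (fun p : ℝ × Y ↦ g x p.2) (nhds (x, y)) (nhds (g x y)) :=
    ((hcont x).comp continuous_snd).tendsto (x, y)
  simpa [ContinuousAt, Function.uncurry_def] using hdiff.add hsnd

end SeparateContinuity

section PlaneGeometry

theorem exists_norm_eq_norm_sub_eq {a b L : ℝ} (ha : 0 ≤ a) (hb : 0 ≤ b) (hlower : |b - a| ≤ L)
    (hupper : L ≤ a + b) : ∃ z : ℂ, ‖z‖ = b ∧ ‖z - a‖ = L := by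
  let d : ℝ → ℝ := fun θ ↦ ‖b * Complex.exp (θ * Complex.I) - a‖
  have hd : ContinuousOn d (Icc 0 Real.pi) := by fun_prop
  have hd₀ : d 0 = |b - a| := by
    simpa [d] using Complex.norm_real (b - a)
  have hdπ : d Real.pi = a + b := by
    have := Complex.norm_real (-(a + b))
    rw [norm_neg, Real.norm_of_nonneg (by positivity)] at this
    rw [← this]
    simp only [d, Complex.exp_pi_mul_I]
    push_cast
    ring_nf
  obtain ⟨θ, -, hθ⟩ := intermediate_value_Icc Real.pi_nonneg hd ⟨hd₀ ▸ hlower, hdπ ▸ hupper⟩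
  exact ⟨b * Complex.exp (θ * Complex.I), by simp [abs_of_nonneg hb], hθ⟩

theorem exists_norm_eq_one_mul_eq {z z' : ℂ} (h : ‖z‖ = ‖z'‖) : ∃ u : ℂ, ‖u‖ = 1 ∧ u * z = z' := by
  rcases eq_or_ne z 0 with rfl | hz
  · exact ⟨1, norm_one, by rw [mul_zero, norm_eq_zero.mp (h.symm.trans norm_zero)]⟩
  · refine ⟨z' / z, ?_, div_mul_cancel₀ z' hz⟩
    rw [norm_div, h, div_self (h ▸ norm_ne_zero_iff.mpr hz)]

theorem eq_and_eq_of_sq_add_sq_eq_of_mul_eq {s t m n : ℝ} (hs : 0 ≤ s) (hst : s ≤ t) (hm : 0 ≤ m)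
    (hmn : m ≤ n) (hsq : s ^ 2 + t ^ 2 = m ^ 2 + n ^ 2) (hmul : s * t = m * n) : s = m ∧ t = n := by
  have hadd : s + t = m + n :=
    (sq_eq_sq₀ (by linarith) (by linarith)).mp (by linear_combination hsq + 2 * hmul)
  have hsub : t - s = n - m :=
    (sq_eq_sq₀ (by linarith) (by linarith)).mp (by linear_combination hsq - 2 * hmul)
  constructor <;> linarith

end PlaneGeometry

section SingularValues

variable {n : ℕ} (ξ : Matrix (Fin n) (Fin n) ℝ)

theorem singularValues_nonneg (i : Fin n) : 0 ≤ singularValues ξ i := Real.sqrt_nonneg _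

theorem monotone_singularValues : Monotone (singularValues ξ) := fun _ _ hij ↦
  Real.sqrt_le_sqrt <|
    Tuple.monotone_sort (Matrix.isHermitian_mul_conjTranspose_self ξ).eigenvalues hij

theorem sum_sq_singularValues :
    ∑ i, singularValues ξ i ^ 2 = (ξ * ξ.conjTranspose).trace := by
  have hξ := Matrix.isHermitian_mul_conjTranspose_self ξ
  have hnonneg := (Matrix.posSemidef_self_mul_conjTranspose ξ).eigenvalues_nonneg
  calc ∑ i, singularValues ξ i ^ 2
      = ∑ i, hξ.eigenvalues (Tuple.sort hξ.eigenvalues i) :=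
        Finset.sum_congr rfl fun i _ ↦ Real.sq_sqrt (hnonneg _)
    _ = ∑ i, hξ.eigenvalues i := Equiv.sum_comp _ _
    _ = (ξ * ξ.conjTranspose).trace := by simpa using hξ.trace_eq_sum_eigenvalues.symm

theorem prod_singularValues : ∏ i, singularValues ξ i = |ξ.det| := by
  have hξ := Matrix.isHermitian_mul_conjTranspose_self ξ
  have hnonneg := (Matrix.posSemidef_self_mul_conjTranspose ξ).eigenvalues_nonneg
  calc ∏ i, singularValues ξ i
      = √(∏ i, hξ.eigenvalues (Tuple.sort hξ.eigenvalues i)) :=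
        (Real.sqrt_prod _ fun i _ ↦ hnonneg _).symm
    _ = √(∏ i, hξ.eigenvalues i) := by rw [Equiv.prod_comp]
    _ = √(ξ * ξ.conjTranspose).det := by
        rw [hξ.det_eq_prod_eigenvalues]
        simp only [RCLike.ofReal_real_eq_id, id_eq]
    _ = |ξ.det| := by
        rw [Matrix.det_mul, Matrix.det_conjTranspose, star_trivial, Real.sqrt_mul_self_eq_abs]

end SingularValues

section ConformalSplit

/-- The splitting of a real `2 × 2` matrix `ξ` into its conformal part `z` and its anticonformal
part `w`: under `ℝ² = ℂ`, the matrix `ξ` acts as `ζ ↦ z * ζ + w * conj ζ`. -/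
noncomputable def conformalSplit : Mat 2 2 ≃ₗ[ℝ] ℂ × ℂ where
  toFun ξ := (⟨(ξ 0 0 + ξ 1 1) / 2, (ξ 1 0 - ξ 0 1) / 2⟩,
    ⟨(ξ 0 0 - ξ 1 1) / 2, (ξ 1 0 + ξ 0 1) / 2⟩)
  invFun p := !![p.1.re + p.2.re, p.2.im - p.1.im; p.1.im + p.2.im, p.1.re - p.2.re]
  map_add' ξ η := by
    refine Prod.ext (Complex.ext ?_ ?_) (Complex.ext ?_ ?_) <;> simp <;> ring
  map_smul' c ξ := by
    refine Prod.ext (Complex.ext ?_ ?_) (Complex.ext ?_ ?_) <;> simp <;> ring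
  left_inv ξ := by
    ext i j
    fin_cases i <;> fin_cases j <;> simp <;> ring
  right_inv p := by
    refine Prod.ext (Complex.ext ?_ ?_) (Complex.ext ?_ ?_) <;> simp <;> ring

theorem det_eq_sq_norm_sub_sq_norm (ξ : Mat 2 2) :
    ξ.det = ‖(conformalSplit ξ).1‖ ^ 2 - ‖(conformalSplit ξ).2‖ ^ 2 := by
  rw [Matrix.det_fin_two, Complex.sq_norm, Complex.sq_norm, Complex.normSq_apply,
    Complex.normSq_apply]
  simp only [conformalSplit, LinearEquiv.coe_mk, LinearMap.coe_mk, AddHom.coe_mk]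
  ring

theorem trace_mul_conjTranspose_eq (ξ : Mat 2 2) : (ξ * ξ.conjTranspose).trace =
    2 * (‖(conformalSplit ξ).1‖ ^ 2 + ‖(conformalSplit ξ).2‖ ^ 2) := by
  rw [Complex.sq_norm, Complex.sq_norm, Complex.normSq_apply, Complex.normSq_apply]
  simp only [conformalSplit, LinearEquiv.coe_mk, LinearMap.coe_mk, AddHom.coe_mk,
    Matrix.trace_fin_two, Matrix.mul_apply, Matrix.conjTranspose_apply, star_trivial,
    Fin.sum_univ_two]
  ring

theorem det_nonneg_iff_norm_le {ξ : Mat 2 2} :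
    0 ≤ ξ.det ↔ ‖(conformalSplit ξ).2‖ ≤ ‖(conformalSplit ξ).1‖ := by
  rw [det_eq_sq_norm_sub_sq_norm, sub_nonneg, sq_le_sq₀ (norm_nonneg _) (norm_nonneg _)]

theorem rank_le_one_iff_norm_eq {ξ : Mat 2 2} :
    ξ.rank ≤ 1 ↔ ‖(conformalSplit ξ).1‖ = ‖(conformalSplit ξ).2‖ := by
  rw [rank_le_one_iff_det_eq_zero, det_eq_sq_norm_sub_sq_norm, sub_eq_zero,
    sq_eq_sq₀ (norm_nonneg _) (norm_nonneg _)]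

theorem singularValues_fin_two (ξ : Mat 2 2) :
    singularValues ξ 0 = |‖(conformalSplit ξ).1‖ - ‖(conformalSplit ξ).2‖| ∧
      singularValues ξ 1 = ‖(conformalSplit ξ).1‖ + ‖(conformalSplit ξ).2‖ := by
  have hsum := sum_sq_singularValues ξ
  have hprod := prod_singularValues ξ
  rw [Fin.sum_univ_two, trace_mul_conjTranspose_eq] at hsum
  rw [Fin.prod_univ_two, det_eq_sq_norm_sub_sq_norm] at hprod
  have hz := norm_nonneg (conformalSplit ξ).1
  have hw := norm_nonneg (conformalSplit ξ).2
  refine eq_and_eq_of_sq_add_sq_eq_of_mul_eq (singularValues_nonneg ξ 0)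
    (monotone_singularValues ξ (Fin.zero_le 1)) (abs_nonneg _) ?_ ?_ ?_
  · rw [abs_le]
    constructor <;> linarith
  · rw [hsum, sq_abs]
    ring
  · rw [hprod, sq_sub_sq, abs_mul, abs_of_nonneg (add_nonneg hz hw), mul_comm]

end ConformalSplit

section IsotropicSets

/-- The cone `{(x₁, x₂) : 0 ≤ x₁ ≤ x₂}` in which the pairs of singular values live. -/
def singularValueCone : Set (ℝ × ℝ) := {p | 0 ≤ p.1 ∧ p.1 ≤ p.2}

/-- The matrices of nonnegative determinant whose singular values, in nondecreasing order, form a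
pair in `Λ`. -/
def isotropicSet (Λ : Set (ℝ × ℝ)) : Set (Mat 2 2) :=
  {ξ | (singularValues ξ 0, singularValues ξ 1) ∈ Λ ∧ 0 ≤ ξ.det}

/-- A set of `2 × 2` matrices is isotropic if it is invariant under rotations on both sides, i.e. if
membership depends only on the moduli of the conformal and anticonformal parts. -/
def IsIsotropic (K : Set (Mat 2 2)) : Prop :=
  ∀ ξ ∈ K, ∀ η, ‖(conformalSplit η).1‖ = ‖(conformalSplit ξ).1‖ →
    ‖(conformalSplit η).2‖ = ‖(conformalSplit ξ).2‖ → η ∈ K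

/-- The trace of a set of matrices on the diagonal matrices `diag(x₁, x₂)` with `0 ≤ x₁ ≤ x₂`. -/
def reducedSet (K : Set (Mat 2 2)) : Set (ℝ × ℝ) :=
  {p | p ∈ singularValueCone ∧ Matrix.diagonal ![p.1, p.2] ∈ K}

variable {Λ : Set (ℝ × ℝ)} {K : Set (Mat 2 2)} {ξ : Mat 2 2} {x y : ℝ}

theorem mem_isotropicSet_iff : ξ ∈ isotropicSet Λ ↔
    (‖(conformalSplit ξ).1‖ - ‖(conformalSplit ξ).2‖,
      ‖(conformalSplit ξ).1‖ + ‖(conformalSplit ξ).2‖) ∈ Λ ∧ 0 ≤ ξ.det := by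
  refine and_congr_left fun hdet ↦ ?_
  rw [(singularValues_fin_two ξ).1, (singularValues_fin_two ξ).2,
    abs_of_nonneg (sub_nonneg.mpr (det_nonneg_iff_norm_le.mp hdet))]

theorem mem_isotropicSet_iff_of_norm_eq (hx : 0 ≤ x) (hz : ‖(conformalSplit ξ).1‖ = (x + y) / 2)
    (hw : ‖(conformalSplit ξ).2‖ = (y - x) / 2) : ξ ∈ isotropicSet Λ ↔ (x, y) ∈ Λ := by
  have hdet : 0 ≤ ξ.det := det_nonneg_iff_norm_le.mpr (by linarith)
  rw [mem_isotropicSet_iff, hz, hw, and_iff_left hdet]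
  ring_nf

theorem norm_conformalSplit_diagonal (hx : 0 ≤ x) (hxy : x ≤ y) :
    ‖(conformalSplit (Matrix.diagonal ![x, y])).1‖ = (x + y) / 2 ∧
      ‖(conformalSplit (Matrix.diagonal ![x, y])).2‖ = (y - x) / 2 := by
  have hsplit : conformalSplit (Matrix.diagonal ![x, y]) =
      ((((x + y) / 2 : ℝ) : ℂ), ((-((y - x) / 2) : ℝ) : ℂ)) := by
    refine Prod.ext (Complex.ext ?_ ?_) (Complex.ext ?_ ?_) <;> simp [conformalSplit]
    ring
  rw [hsplit, Complex.norm_real, Complex.norm_real, norm_neg,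
    Real.norm_of_nonneg (by linarith), Real.norm_of_nonneg (by linarith)]
  exact ⟨rfl, rfl⟩

theorem diagonal_mem_isotropicSet_iff (hx : 0 ≤ x) (hxy : x ≤ y) :
    Matrix.diagonal ![x, y] ∈ isotropicSet Λ ↔ (x, y) ∈ Λ :=
  have ⟨hz, hw⟩ := norm_conformalSplit_diagonal hx hxy
  mem_isotropicSet_iff_of_norm_eq hx hz hw

theorem isotropicSet_mono {Λ' : Set (ℝ × ℝ)} (h : Λ ⊆ Λ') : isotropicSet Λ ⊆ isotropicSet Λ' :=
  fun _ hξ ↦ ⟨h hξ.1, hξ.2⟩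

theorem isIsotropic_isotropicSet (Λ : Set (ℝ × ℝ)) : IsIsotropic (isotropicSet Λ) := by
  intro ξ hξ η hz hw
  rw [mem_isotropicSet_iff, det_eq_sq_norm_sub_sq_norm] at hξ ⊢
  rwa [hz, hw]

theorem IsIsotropic.rcoF (hK : IsIsotropic K) : IsIsotropic (RcoF K) := by
  intro ξ hξ η hz hw
  obtain ⟨u, hu, huz⟩ := exists_norm_eq_one_mul_eq hz.symm
  obtain ⟨v, hv, hvw⟩ := exists_norm_eq_one_mul_eq hw.symm
  let T : Mat 2 2 →ₗ[ℝ] Mat 2 2 := conformalSplit.symm.toLinearMap ∘ₗ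
    (LinearMap.mulLeft ℝ u).prodMap (LinearMap.mulLeft ℝ v) ∘ₗ conformalSplit.toLinearMap
  have hT₁ (A : Mat 2 2) : (conformalSplit (T A)).1 = u * (conformalSplit A).1 := by simp [T]
  have hT₂ (A : Mat 2 2) : (conformalSplit (T A)).2 = v * (conformalSplit A).2 := by simp [T]
  have hTrank (A : Mat 2 2) (hA : A.rank ≤ 1) : (T A).rank ≤ 1 := by
    rw [rank_le_one_iff_norm_eq] at hA ⊢
    rw [hT₁, hT₂, norm_mul, norm_mul, hu, hv, hA]
  have hTK : MapsTo T K K := fun A hA ↦ hK A hA _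
    (by rw [hT₁, norm_mul, hu, one_mul]) (by rw [hT₂, norm_mul, hv, one_mul])
  have hTξ : T ξ = η := conformalSplit.injective <|
    Prod.ext ((hT₁ ξ).trans huz) ((hT₂ ξ).trans hvw)
  exact hTξ ▸ mapsTo_rcoF hTrank hTK hξ

theorem isotropicSet_reducedSet (hK : IsIsotropic K) (hdet : ∀ ξ ∈ K, 0 ≤ ξ.det) :
    isotropicSet (reducedSet K) = K := by
  have key {ξ : Mat 2 2} (hξ : 0 ≤ ξ.det) : ξ ∈ isotropicSet (reducedSet K) ↔ ξ ∈ K := by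
    have hx := sub_nonneg.mpr (det_nonneg_iff_norm_le.mp hξ)
    have hxy : ‖(conformalSplit ξ).1‖ - ‖(conformalSplit ξ).2‖ ≤
        ‖(conformalSplit ξ).1‖ + ‖(conformalSplit ξ).2‖ := by
      linarith [norm_nonneg (conformalSplit ξ).2]
    obtain ⟨hz, hw⟩ := norm_conformalSplit_diagonal hx hxy
    ring_nf at hz hw
    rw [mem_isotropicSet_iff, and_iff_left hξ]
    exact ⟨fun h ↦ hK _ h.2 ξ hz.symm hw.symm, fun h ↦ ⟨⟨hx, hxy⟩, hK ξ h _ hz hw⟩⟩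
  exact Subset.antisymm (fun ξ hξ ↦ (key hξ.2).mp hξ) fun ξ hξ ↦ (key (hdet ξ hξ)).mpr hξ

end IsotropicSets

section ReducedClosure

variable {R : Set (ℝ × ℝ)} {x y : ℝ}

theorem norm_add_mul_I_eq {a b r : ℝ} (hr : 0 ≤ r) (h : a ^ 2 + b ^ 2 = r ^ 2) :
    ‖(a + b * Complex.I : ℂ)‖ = r := by
  rw [Complex.norm_add_mul_I, h, Real.sqrt_sq hr]

-- On the line `z = √(x * y) + τ * I`, `w = τ * I` the determinant is constant, and the singular
-- values have difference `2 * |τ|`.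
theorem mem_of_mul_eq_of_sub_le (hcone : R ⊆ singularValueCone)
    (hR : RankOneConvexSet (isotropicSet R)) {p : ℝ × ℝ} (hp : p ∈ R) (hx : 0 ≤ x) (hxy : x ≤ y)
    (hmul : x * y = p.1 * p.2) (hsub : y - x ≤ p.2 - p.1) : (x, y) ∈ R := by
  obtain ⟨hp₁, hp₁₂⟩ := hcone hp
  have hsq : √(x * y) ^ 2 = x * y := Real.sq_sqrt (mul_nonneg hx (hx.trans hxy))
  let A : Mat 2 2 := conformalSplit.symm (√(x * y), 0)
  let B : Mat 2 2 := conformalSplit.symm (Complex.I, Complex.I)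
  have hB : B.rank ≤ 1 := rank_le_one_iff_norm_eq.mpr (by simp [B])
  have hz (τ : ℝ) : (conformalSplit (A + τ • B)).1 = √(x * y) + τ * Complex.I := by simp [A, B]
  have hw (τ : ℝ) : ‖(conformalSplit (A + τ • B)).2‖ = |τ| := by simp [A, B]
  have hmem {a b τ : ℝ} (ha : 0 ≤ a) (hab : a ≤ b) (hprod : a * b = x * y)
      (hτ : |τ| = (b - a) / 2) : A + τ • B ∈ isotropicSet R ↔ (a, b) ∈ R := by
    refine mem_isotropicSet_iff_of_norm_eq ha ?_ ((hw τ).trans hτ)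
    rw [hz, norm_add_mul_I_eq (r := (a + b) / 2) (by linarith)]
    rw [← sq_abs τ, hτ, hsq]
    linear_combination -hprod
  have hends {τ : ℝ} (hτ : |τ| = (p.2 - p.1) / 2) : A + τ • B ∈ isotropicSet R :=
    (hmem hp₁ hp₁₂ hmul.symm hτ).mpr hp
  have hline := (hR.convex_setOf_add_smul_mem A hB).ordConnected
  refine (hmem (τ := (y - x) / 2) hx hxy rfl (abs_of_nonneg (by linarith))).mp ?_
  exact hline.out (hends (τ := -((p.2 - p.1) / 2)) (by rw [abs_neg, abs_of_nonneg (by linarith)]))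
    (hends (abs_of_nonneg (by linarith))) ⟨by linarith, by linarith⟩

theorem mem_of_mul_eq_det_of_sub_le (hcone : R ⊆ singularValueCone)
    (hR : RankOneConvexSet (isotropicSet R)) {ξ : Mat 2 2} (hξ : ξ ∈ isotropicSet R) (hx : 0 ≤ x)
    (hxy : x ≤ y) (hmul : x * y = ξ.det) (hsub : y - x ≤ 2 * ‖(conformalSplit ξ).2‖) :
    (x, y) ∈ R := by
  refine mem_of_mul_eq_of_sub_le hcone hR (mem_isotropicSet_iff.mp hξ).1 hx hxy ?_ (by linarith)
  rw [hmul, det_eq_sq_norm_sub_sq_norm, sq_sub_sq, mul_comm]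

theorem mem_of_mul_eq_det_of_add_le (hcone : R ⊆ singularValueCone)
    (hR : RankOneConvexSet (isotropicSet R)) {ξ : Mat 2 2} (hξ : ξ ∈ isotropicSet R) (hx : 0 ≤ x)
    (hxy : x ≤ y) (hmul : x * y = ξ.det) (hadd : x + y ≤ 2 * ‖(conformalSplit ξ).1‖) :
    (x, y) ∈ R := by
  refine mem_of_mul_eq_det_of_sub_le hcone hR hξ hx hxy hmul ?_
  rw [det_eq_sq_norm_sub_sq_norm] at hmul
  have hsq := pow_le_pow_left₀ (by linarith) hadd 2
  exact (sq_le_sq₀ (by linarith) (by positivity)).mp (by linear_combination hsq - 4 * hmul)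

theorem exists_mem_isotropicSet_conformalSplit_eq (hcone : R ⊆ singularValueCone)
    (hR : RankOneConvexSet (isotropicSet R)) {p q : ℝ × ℝ} (hp : p ∈ R) (hq : q ∈ R)
    {z w z' w' : ℂ} (hz : ‖z‖ = (p.1 + p.2) / 2) (hw : ‖w‖ = (p.2 - p.1) / 2)
    (hz' : ‖z'‖ = (q.1 + q.2) / 2) (hw' : ‖w'‖ = (q.2 - q.1) / 2) (hzw : ‖z' - z‖ = ‖w' - w‖)
    {t : ℝ} (ht : t ∈ Icc (0 : ℝ) 1) :
    ∃ ξ ∈ isotropicSet R, ξ.det = (1 - t) * (p.1 * p.2) + t * (q.1 * q.2) ∧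
      conformalSplit ξ = (t • z' + (1 - t) • z, t • w' + (1 - t) • w) := by
  let A : Mat 2 2 := conformalSplit.symm (z, w)
  let B : Mat 2 2 := conformalSplit.symm (z', w')
  have hA : A ∈ isotropicSet R :=
    (mem_isotropicSet_iff_of_norm_eq (hcone hp).1 (by simp [A, hz]) (by simp [A, hw])).mpr hp
  have hB : B ∈ isotropicSet R :=
    (mem_isotropicSet_iff_of_norm_eq (hcone hq).1 (by simp [B, hz']) (by simp [B, hw'])).mpr hq
  have hAB : (B - A).rank ≤ 1 := rank_le_one_iff_norm_eq.mpr (by simpa [A, B] using hzw)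
  have hdetA : A.det = p.1 * p.2 := by
    simp only [det_eq_sq_norm_sub_sq_norm, A, LinearEquiv.apply_symm_apply, hz, hw]
    ring
  have hdetB : B.det = q.1 * q.2 := by
    simp only [det_eq_sq_norm_sub_sq_norm, B, LinearEquiv.apply_symm_apply, hz', hw']
    ring
  refine ⟨t • B + (1 - t) • A, hR.combo_mem hB hA hAB ht, ?_, by simp [A, B]⟩
  rw [det_combo (rank_le_one_iff_det_eq_zero.mp hAB), hdetA, hdetB, add_comm]

theorem norm_combo_ofReal {a b t : ℝ} (ha : 0 ≤ a) (hb : 0 ≤ b) (ht : t ∈ Icc (0 : ℝ) 1) :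
    ‖t • (b : ℂ) + (1 - t) • (a : ℂ)‖ = t * b + (1 - t) * a := by
  rw [Complex.real_smul, Complex.real_smul, ← Complex.ofReal_mul, ← Complex.ofReal_mul,
    ← Complex.ofReal_add, Complex.norm_of_nonneg]
  exact add_nonneg (mul_nonneg ht.1 hb) (mul_nonneg (sub_nonneg.mpr ht.2) ha)

-- `p` and `q` are realised with the same anticonformal direction. The triangle that makes their
-- difference have rank one exists exactly when `[p.1, p.2]` and `[q.1, q.2]` are nested.
theorem mem_of_nested (hcone : R ⊆ singularValueCone) (hR : RankOneConvexSet (isotropicSet R))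
    {p q : ℝ × ℝ} (hp : p ∈ R) (hq : q ∈ R) (hpq : (q.1 - p.1) * (q.2 - p.2) ≤ 0) (hx : 0 ≤ x)
    (hxy : x ≤ y) {t : ℝ} (ht : t ∈ Icc (0 : ℝ) 1)
    (hmul : (1 - t) * (p.1 * p.2) + t * (q.1 * q.2) = x * y)
    (hsub : y - x ≤ (1 - t) * (p.2 - p.1) + t * (q.2 - q.1)) : (x, y) ∈ R := by
  obtain ⟨hp₁, hp₁₂⟩ := hcone hp
  obtain ⟨hq₁, hq₁₂⟩ := hcone hq
  have hp₀ : 0 ≤ (p.2 - p.1) / 2 := by linarith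
  have hq₀ : 0 ≤ (q.2 - q.1) / 2 := by linarith
  obtain ⟨z, hz, hzp⟩ : ∃ z : ℂ, ‖z‖ = (q.1 + q.2) / 2 ∧
      ‖z - ((p.1 + p.2) / 2 : ℝ)‖ = |(q.2 - q.1) / 2 - (p.2 - p.1) / 2| :=
    exists_norm_eq_norm_sub_eq (by linarith) (by linarith) (sq_le_sq.mp (by linarith))
      (abs_le.mpr ⟨by linarith, by linarith⟩)
  obtain ⟨ξ, hξ, hdet, hsplit⟩ := exists_mem_isotropicSet_conformalSplit_eq hcone hR hp hq
    (Complex.norm_of_nonneg (by linarith)) (Complex.norm_of_nonneg hp₀) hz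
    (Complex.norm_of_nonneg hq₀)
    (hzp.trans (by rw [← Complex.ofReal_sub, Complex.norm_real, Real.norm_eq_abs])) ht
  refine mem_of_mul_eq_det_of_sub_le hcone hR hξ hx hxy (hmul.symm.trans hdet.symm) ?_
  rw [hsplit, norm_combo_ofReal hp₀ hq₀ ht]
  linarith

-- With a shared conformal direction, the triangle exists when the two intervals interlace.
theorem mem_of_interlaced (hcone : R ⊆ singularValueCone) (hR : RankOneConvexSet (isotropicSet R))
    {p q : ℝ × ℝ} (hp : p ∈ R) (hq : q ∈ R) (hpq₁ : p.1 ≤ q.1) (hqp : q.1 ≤ p.2)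
    (hpq₂ : p.2 ≤ q.2) (hx : 0 ≤ x) (hxy : x ≤ y) {t : ℝ} (ht : t ∈ Icc (0 : ℝ) 1)
    (hmul : (1 - t) * (p.1 * p.2) + t * (q.1 * q.2) = x * y)
    (hadd : x + y ≤ (1 - t) * (p.1 + p.2) + t * (q.1 + q.2)) : (x, y) ∈ R := by
  have hp₁ : 0 ≤ p.1 := (hcone hp).1
  have hp₀ : 0 ≤ (p.1 + p.2) / 2 := by linarith
  have hq₀ : 0 ≤ (q.1 + q.2) / 2 := by linarith
  have hmono := mul_nonneg (sub_nonneg.mpr hpq₁) (sub_nonneg.mpr hpq₂)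
  obtain ⟨w, hw, hwp⟩ : ∃ w : ℂ, ‖w‖ = (q.2 - q.1) / 2 ∧
      ‖w - ((p.2 - p.1) / 2 : ℝ)‖ = |(q.1 + q.2) / 2 - (p.1 + p.2) / 2| :=
    exists_norm_eq_norm_sub_eq (by linarith) (by linarith) (sq_le_sq.mp (by linarith))
      (abs_le.mpr ⟨by linarith, by linarith⟩)
  obtain ⟨ξ, hξ, hdet, hsplit⟩ := exists_mem_isotropicSet_conformalSplit_eq hcone hR hp hq
    (Complex.norm_of_nonneg hp₀) (Complex.norm_of_nonneg (by linarith))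
    (Complex.norm_of_nonneg hq₀) hw
    (.symm (hwp.trans (by rw [← Complex.ofReal_sub, Complex.norm_real, Real.norm_eq_abs]))) ht
  refine mem_of_mul_eq_det_of_add_le hcone hR hξ hx hxy (hmul.symm.trans hdet.symm) ?_
  rw [hsplit, norm_combo_ofReal hp₀ hq₀ ht]
  linarith

theorem diag_mem_of_isPreconnected (hcone : R ⊆ singularValueCone)
    (hR : RankOneConvexSet (isotropicSet R)) (hconn : IsPreconnected R) {p q : ℝ × ℝ} (hp : p ∈ R)
    (hq : q ∈ R) (hx : 0 ≤ x) (hpx : p.1 * p.2 ≤ x * x) (hxq : x * x ≤ q.1 * q.2) :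
    (x, x) ∈ R := by
  obtain ⟨r, hr, hrx⟩ := hconn.intermediate_value hp hq
    (by fun_prop : ContinuousOn (fun p : ℝ × ℝ ↦ p.1 * p.2) R) ⟨hpx, hxq⟩
  exact mem_of_mul_eq_of_sub_le hcone hR hr hx le_rfl hrx.symm (by linarith [(hcone hr).2])

theorem mem_of_mem_of_mem_fst (hR : RankOneConvexSet (isotropicSet R)) (hx : 0 ≤ x) {y₁ y₂ : ℝ}
    (hxy₁ : x ≤ y₁) (h₁ : (x, y₁) ∈ R) (h₂ : (x, y₂) ∈ R) (hy : y ∈ Icc y₁ y₂) : (x, y) ∈ R := by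
  have hmem {t : ℝ} (ht : x ≤ t) := diagonal_mem_isotropicSet_iff (Λ := R) hx ht
  exact (hmem (hxy₁.trans hy.1)).mp <| (hR.convex_setOf_diagonal_mem_right x).ordConnected.out
    ((hmem hxy₁).mpr h₁) ((hmem (hxy₁.trans (hy.1.trans hy.2))).mpr h₂) hy

theorem mem_of_mem_of_mem_snd (hR : RankOneConvexSet (isotropicSet R)) {x₁ x₂ : ℝ} (hx₁ : 0 ≤ x₁)
    (hxy₂ : x₂ ≤ y) (h₁ : (x₁, y) ∈ R) (h₂ : (x₂, y) ∈ R) (hx : x ∈ Icc x₁ x₂) : (x, y) ∈ R := by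
  have hmem {t : ℝ} (ht₀ : 0 ≤ t) (ht : t ≤ y) := diagonal_mem_isotropicSet_iff (Λ := R) ht₀ ht
  exact (hmem (hx₁.trans hx.1) (hx.2.trans hxy₂)).mp <|
    (hR.convex_setOf_diagonal_mem_left y).ordConnected.out
      ((hmem hx₁ (hx.1.trans (hx.2.trans hxy₂))).mpr h₁)
      ((hmem (hx₁.trans (hx.1.trans hx.2)) hxy₂).mpr h₂) hx

theorem mem_of_fst_le (hcone : R ⊆ singularValueCone) (hR : RankOneConvexSet (isotropicSet R))
    (hconn : IsPreconnected R) {p q : ℝ × ℝ} (hp : p ∈ R) (hq : q ∈ R)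
    (hpmul : p.1 * p.2 ≤ x * y) (hqmul : x * y ≤ q.1 * q.2) (hpx : p.1 ≤ x) (hqx : q.1 ≤ x)
    (hx : 0 < x) (hxy : x ≤ y) : (x, y) ∈ R := by
  have hmul (s : ℝ) : x * (s / x) = s := mul_div_cancel₀ s hx.ne'
  have hshift {r : ℝ × ℝ} (hr : r ∈ R) (hrx : r.1 ≤ x) (hrs : x ≤ r.1 * r.2 / x) :
      (x, r.1 * r.2 / x) ∈ R :=
    mem_of_mul_eq_of_sub_le hcone hR hr hx.le hrs (hmul _) <|
      sub_le_sub ((div_le_iff₀ hx).mpr (by nlinarith [(hcone hr).1, (hcone hr).2])) hrx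
  have hyq : y ≤ q.1 * q.2 / x := (le_div_iff₀' hx).mpr hqmul
  have hpy : p.1 * p.2 / x ≤ y := (div_le_iff₀' hx).mpr hpmul
  have hxq := hshift hq hqx (hxy.trans hyq)
  rcases le_total x (p.1 * p.2 / x) with hxp | hxp
  · exact mem_of_mem_of_mem_fst hR hx.le hxp (hshift hp hpx hxp) hxq ⟨hpy, hyq⟩
  · have hxx : (x, x) ∈ R := diag_mem_of_isPreconnected hcone hR hconn hp hq hx.le
      ((div_le_iff₀ hx).mp hxp) ((mul_le_mul_of_nonneg_left hxy hx.le).trans hqmul)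
    exact mem_of_mem_of_mem_fst hR hx.le le_rfl hxx hxq ⟨hxy, hyq⟩

theorem mem_of_le_snd (hcone : R ⊆ singularValueCone) (hR : RankOneConvexSet (isotropicSet R))
    (hconn : IsPreconnected R) {p q : ℝ × ℝ} (hp : p ∈ R) (hq : q ∈ R)
    (hpmul : p.1 * p.2 ≤ x * y) (hqmul : x * y ≤ q.1 * q.2) (hpy : y ≤ p.2) (hqy : y ≤ q.2)
    (hxy : x ≤ y) (hy : 0 < y) : (x, y) ∈ R := by
  have hmul (s : ℝ) : s / y * y = s := div_mul_cancel₀ s hy.ne'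
  have hnonneg {r : ℝ × ℝ} (hr : r ∈ R) : 0 ≤ r.1 * r.2 / y :=
    div_nonneg (mul_nonneg (hcone hr).1 ((hcone hr).1.trans (hcone hr).2)) hy.le
  have hshift {r : ℝ × ℝ} (hr : r ∈ R) (hry : y ≤ r.2) (hrs : r.1 * r.2 / y ≤ y) :
      (r.1 * r.2 / y, y) ∈ R :=
    mem_of_mul_eq_of_sub_le hcone hR hr (hnonneg hr) hrs (hmul _) <|
      sub_le_sub hry ((le_div_iff₀ hy).mpr (mul_le_mul_of_nonneg_left hry (hcone hr).1))
  have hxq : x ≤ q.1 * q.2 / y := (le_div_iff₀ hy).mpr hqmul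
  have hpx : p.1 * p.2 / y ≤ x := (div_le_iff₀ hy).mpr hpmul
  have hyp := hshift hp hpy (hpx.trans hxy)
  rcases le_total (q.1 * q.2 / y) y with hyq | hyq
  · exact mem_of_mem_of_mem_snd hR (hnonneg hp) hyq hyp (hshift hq hqy hyq) ⟨hpx, hxq⟩
  · have hyy : (y, y) ∈ R := diag_mem_of_isPreconnected hcone hR hconn hp hq hy.le
      (hpmul.trans (mul_le_mul_of_nonneg_right hxy hy.le)) ((le_div_iff₀ hy).mp hyq)
    exact mem_of_mem_of_mem_snd hR (hnonneg hp) le_rfl hyp hyy ⟨hpx, hxy⟩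

end ReducedClosure

section Dichotomy

variable {R : Set (ℝ × ℝ)} {x y : ℝ}

theorem chord_sub_lt {p q : ℝ × ℝ} (hp : p ∈ singularValueCone) (hpq₁ : p.1 < q.1)
    (hpq₂ : p.2 < q.2) (hx : 0 ≤ x) (hxy : x ≤ y) (hout : x < p.1 ∨ q.2 < y) {t : ℝ}
    (ht : t ∈ Icc (0 : ℝ) 1) (hmul : (1 - t) * (p.1 * p.2) + t * (q.1 * q.2) = x * y) :
    (1 - t) * (p.2 - p.1) + t * (q.2 - q.1) < y - x := by
  obtain ⟨hp₁, hp₁₂⟩ := hp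
  rcases hout with hout | hout
  · -- `p.1 * (r.2 - r.1) ≤ r.1 * r.2 - p.1 ^ 2` amounts to `0 ≤ (r.1 - p.1) * (r.2 + p.1)`.
    have hq : 0 ≤ (q.1 - p.1) * (q.2 + p.1) := mul_nonneg (by linarith) (by linarith)
    have hxy' : 0 < (p.1 - x) * (y + p.1) := mul_pos (by linarith) (by linarith)
    exact combo_lt_of_le_affine (u := p.1) (l := 1) (c := -p.1 ^ 2) (by linarith) ht (by linarith)
      (by linarith) (by linarith) hmul
  · -- `q.2 * (r.2 - r.1) ≤ q.2 ^ 2 - r.1 * r.2` amounts to `0 ≤ (q.2 - r.2) * (q.2 + r.1)`.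
    have hp : 0 ≤ (q.2 - p.2) * (q.2 + p.1) := mul_nonneg (by linarith) (by linarith)
    have hxy' : 0 < (y - q.2) * (q.2 + x) := mul_pos (by linarith) (by linarith)
    exact combo_lt_of_le_affine (u := q.2) (l := -1) (c := q.2 ^ 2) (by linarith) ht (by linarith)
      (by linarith) (by linarith) hmul

theorem chord_add_lt_of_mul_sub {p q : ℝ × ℝ} {u : ℝ} (hu : 0 < u) (hp : 0 ≤ (p.1 - u) * (p.2 - u))
    (hq : 0 ≤ (q.1 - u) * (q.2 - u)) (hxu : x < u) (huy : u < y) {t : ℝ} (ht : t ∈ Icc (0 : ℝ) 1)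
    (hmul : (1 - t) * (p.1 * p.2) + t * (q.1 * q.2) = x * y) :
    (1 - t) * (p.1 + p.2) + t * (q.1 + q.2) < x + y := by
  have hxy : 0 < (u - x) * (y - u) := mul_pos (sub_pos.mpr hxu) (sub_pos.mpr huy)
  exact combo_lt_of_le_affine (u := u) (l := 1) (c := u ^ 2) hu ht (by linarith) (by linarith)
    (by linarith) hmul

theorem chord_add_lt {p q : ℝ × ℝ} (hp : p.1 ≤ p.2) (hq : q.1 ≤ q.2)
    (hpq : ¬(p.1 ≤ q.1 ∧ q.1 ≤ p.2 ∧ p.2 ≤ q.2)) (hx : 0 ≤ x) (hxy : x < y) (hpy : p.2 < y)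
    (hxq : x < q.1) {t : ℝ} (ht : t ∈ Icc (0 : ℝ) 1)
    (hmul : (1 - t) * (p.1 * p.2) + t * (q.1 * q.2) = x * y) :
    (1 - t) * (p.1 + p.2) + t * (q.1 + q.2) < x + y := by
  have key (u : ℝ) (hxu : x < u) (huy : u < y) (hpu : 0 ≤ (p.1 - u) * (p.2 - u))
      (hqu : 0 ≤ (q.1 - u) * (q.2 - u)) :=
    chord_add_lt_of_mul_sub (hx.trans_lt hxu) hpu hqu hxu huy ht hmul
  rcases lt_or_ge q.1 p.1 with h₁ | h₁
  · exact key q.1 hxq (by linarith) (mul_nonneg (by linarith) (by linarith)) (by simp)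
  rcases lt_or_ge q.2 p.2 with h₂ | h₂
  · exact key p.2 (by linarith) hpy (by simp)
      (mul_nonneg_of_nonpos_of_nonpos (by linarith) (by linarith))
  have hpq : p.2 < q.1 := not_le.mp fun h ↦ hpq ⟨h₁, h, h₂⟩
  obtain ⟨u, hu, hu'⟩ : ∃ u, max p.2 x < u ∧ u < min q.1 y :=
    exists_between (max_lt (lt_min hpq hpy) (lt_min hxq hxy))
  rw [max_lt_iff] at hu
  rw [lt_min_iff] at hu'
  exact key u hu.2 hu'.2 (mul_nonneg_of_nonpos_of_nonpos (by linarith) (by linarith))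
    (mul_nonneg (by linarith) (by linarith))

theorem mem_of_mul_eq_of_add_le (hcone : R ⊆ singularValueCone)
    (hR : RankOneConvexSet (isotropicSet R)) {p : ℝ × ℝ} (hp : p ∈ R) (hx : 0 ≤ x) (hxy : x ≤ y)
    (hmul : x * y = p.1 * p.2) (hadd : x + y ≤ p.1 + p.2) : (x, y) ∈ R := by
  have hp₁₂ : p.1 ≤ p.2 := (hcone hp).2
  refine mem_of_mul_eq_of_sub_le hcone hR hp hx hxy hmul ?_
  have hsq := pow_le_pow_left₀ (by linarith) hadd 2
  exact (sq_le_sq₀ (by linarith) (by linarith)).mp (by linear_combination hsq - 4 * hmul)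

theorem exists_slope_sub_lt (hRc : IsCompact R) (hcone : R ⊆ singularValueCone)
    (hR : RankOneConvexSet (isotropicSet R)) (hx : 0 ≤ x) (hxy : x ≤ y) (hnot : (x, y) ∉ R)
    (hout : ∀ p ∈ R, ∀ q ∈ R, p.1 * p.2 < x * y → x * y < q.1 * q.2 → x < p.1 ∨ q.2 < y) :
    ∃ k : ℝ, ∀ p ∈ R, p.2 - p.1 < y - x + k * (p.1 * p.2 - x * y) := by
  refine exists_slope_forall_lt hRc (by fun_prop) (by fun_prop) (fun p hp hmul ↦ ?_)
    fun p hp q hq hpx hxq t ht hmul ↦ ?_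
  · by_contra! hsub
    exact hnot (mem_of_mul_eq_of_sub_le hcone hR hp hx hxy hmul.symm hsub)
  rcases le_or_gt ((q.1 - p.1) * (q.2 - p.2)) 0 with hpq | hpq
  · by_contra! hsub
    exact hnot (mem_of_nested hcone hR hp hq hpq hx hxy ht hmul hsub)
  obtain ⟨h₁, h₂⟩ | ⟨h₁, h₂⟩ := pos_and_pos_or_neg_and_neg_of_mul_pos hpq
  · exact chord_sub_lt (hcone hp) (sub_pos.mp h₁) (sub_pos.mp h₂) hx hxy
      (hout p hp q hq hpx hxq) ht hmul
  · have hqp : q.1 * q.2 ≤ p.1 * p.2 := mul_le_mul (sub_neg.mp h₁).le (sub_neg.mp h₂).le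
      ((hcone hq).1.trans (hcone hq).2) (hcone hp).1
    exact absurd (hpx.trans hxq) hqp.not_gt

theorem exists_slope_add_lt (hRc : IsCompact R) (hcone : R ⊆ singularValueCone)
    (hR : RankOneConvexSet (isotropicSet R)) (hx : 0 ≤ x) (hxy : x < y) (hnot : (x, y) ∉ R)
    (hleft : ∀ p ∈ R, p.1 * p.2 < x * y → p.2 < y)
    (hright : ∀ q ∈ R, x * y < q.1 * q.2 → x < q.1) :
    ∃ k : ℝ, ∀ p ∈ R, p.1 + p.2 < x + y + k * (p.1 * p.2 - x * y) := by
  refine exists_slope_forall_lt hRc (by fun_prop) (by fun_prop) (fun p hp hmul ↦ ?_)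
    fun p hp q hq hpx hxq t ht hmul ↦ ?_
  · by_contra! hadd
    exact hnot (mem_of_mul_eq_of_add_le hcone hR hp hx hxy.le hmul.symm hadd)
  by_cases hpq : p.1 ≤ q.1 ∧ q.1 ≤ p.2 ∧ p.2 ≤ q.2
  · obtain ⟨h₁, h₁₂, h₂⟩ := hpq
    by_contra! hadd
    exact hnot (mem_of_interlaced hcone hR hp hq h₁ h₁₂ h₂ hx hxy.le ht hmul hadd)
  · exact chord_add_lt (hcone hp).2 (hcone hq).2 hpq hx hxy (hleft p hp hpx) (hright q hq hxq) ht
      hmul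

theorem exists_slope_sub_lt_or_exists_slope_add_lt (hRc : IsCompact R)
    (hcone : R ⊆ singularValueCone) (hR : RankOneConvexSet (isotropicSet R))
    (hconn : IsPreconnected R) (hx : 0 ≤ x) (hxy : x ≤ y) (hnot : (x, y) ∉ R) :
    (∃ k : ℝ, ∀ p ∈ R, p.2 - p.1 < y - x + k * (p.1 * p.2 - x * y)) ∨
      ∃ k : ℝ, ∀ p ∈ R, p.1 + p.2 < x + y + k * (p.1 * p.2 - x * y) := by
  by_cases! hout : ∀ p ∈ R, ∀ q ∈ R, p.1 * p.2 < x * y → x * y < q.1 * q.2 → x < p.1 ∨ q.2 < y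
  · exact .inl (exists_slope_sub_lt hRc hcone hR hx hxy hnot hout)
  obtain ⟨p, hp, q, hq, hpmul, hqmul, hpx, hqy⟩ := hout
  have hpos : 0 < x * y :=
    (mul_nonneg (hcone hp).1 ((hcone hp).1.trans (hcone hp).2)).trans_lt hpmul
  have hx₀ : 0 < x := hx.lt_of_ne' (left_ne_zero_of_mul hpos.ne')
  have hxy' : x < y := hxy.lt_of_ne fun h ↦ hnot <| by
    subst h
    exact diag_mem_of_isPreconnected hcone hR hconn hp hq hx hpmul.le hqmul.le
  refine .inr (exists_slope_add_lt hRc hcone hR hx hxy' hnot (fun p' hp' hp'mul ↦ ?_)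
    fun q' hq' hq'mul ↦ ?_)
  · by_contra! hp'y
    exact hnot (mem_of_le_snd hcone hR hconn hp' hq hp'mul.le hqmul.le hp'y hqy hxy
      (hx₀.trans hxy'))
  · by_contra! hq'x
    exact hnot (mem_of_fst_le hcone hR hconn hp hq' hpmul.le hq'mul.le hpx hq'x hx₀ hxy)

end Dichotomy

section Hull

variable {R Λ : Set (ℝ × ℝ)} {ξ : Mat 2 2}

theorem rankOneConvexFun_two_mul_norm_fst_add_const_mul_det (k : ℝ) :
    RankOneConvexFun fun ξ : Mat 2 2 ↦ 2 * ‖(conformalSplit ξ).1‖ + k * ξ.det := by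
  simpa [norm_smul] using rankOneConvexFun_norm_add_const_mul_det
    ((2 : ℝ) • LinearMap.fst ℝ ℂ ℂ ∘ₗ conformalSplit.toLinearMap) k

theorem rankOneConvexFun_two_mul_norm_snd_add_const_mul_det (k : ℝ) :
    RankOneConvexFun fun ξ : Mat 2 2 ↦ 2 * ‖(conformalSplit ξ).2‖ + k * ξ.det := by
  simpa [norm_smul] using rankOneConvexFun_norm_add_const_mul_det
    ((2 : ℝ) • LinearMap.snd ℝ ℂ ℂ ∘ₗ conformalSplit.toLinearMap) k

theorem RankOneConvexFun.lt_of_mem_rcoF_isotropicSet {f : Mat 2 2 → ℝ} (hf : RankOneConvexFun f)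
    {g : ℝ × ℝ → ℝ} (hR : IsCompact R) (hg : ContinuousOn g R)
    (hfg : ∀ η, f η = g (‖(conformalSplit η).1‖ - ‖(conformalSplit η).2‖,
      ‖(conformalSplit η).1‖ + ‖(conformalSplit η).2‖))
    {c : ℝ} (hgc : ∀ p ∈ R, g p < c) (hξ : ξ ∈ RcoF (isotropicSet R)) : f ξ < c := by
  obtain ⟨c', hc', hgc'⟩ := hR.exists_forall_le' (α := ℝᵒᵈ) hg hgc
  refine (hf.le_of_mem_rcoF (fun η hη ↦ ?_) hξ).trans_lt hc'
  rw [hfg]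
  exact hgc' _ (mem_isotropicSet_iff.mp hη).1

theorem two_mul_norm_fst_add_lt_of_mem_rcoF (hR : IsCompact R) {k c : ℝ}
    (hc : ∀ p ∈ R, p.1 + p.2 + k * (p.1 * p.2) < c) (hξ : ξ ∈ RcoF (isotropicSet R)) :
    2 * ‖(conformalSplit ξ).1‖ + k * ξ.det < c := by
  refine (rankOneConvexFun_two_mul_norm_fst_add_const_mul_det k).lt_of_mem_rcoF_isotropicSet hR
    (by fun_prop) (fun η ↦ ?_) hc hξ
  rw [det_eq_sq_norm_sub_sq_norm]
  ring

theorem two_mul_norm_snd_add_lt_of_mem_rcoF (hR : IsCompact R) {k c : ℝ}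
    (hc : ∀ p ∈ R, p.2 - p.1 + k * (p.1 * p.2) < c) (hξ : ξ ∈ RcoF (isotropicSet R)) :
    2 * ‖(conformalSplit ξ).2‖ + k * ξ.det < c := by
  refine (rankOneConvexFun_two_mul_norm_snd_add_const_mul_det k).lt_of_mem_rcoF_isotropicSet hR
    (by fun_prop) (fun η ↦ ?_) hc hξ
  rw [det_eq_sq_norm_sub_sq_norm]
  ring

theorem det_nonneg_of_mem_rcoF_isotropicSet (hξ : ξ ∈ RcoF (isotropicSet R)) : 0 ≤ ξ.det :=
  det_nonneg_of_mem_rcoF (fun _ hη ↦ hη.2) hξ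

theorem rcoF_isotropicSet_subset (hRc : IsCompact R) (hcone : R ⊆ singularValueCone)
    (hR : RankOneConvexSet (isotropicSet R)) (hconn : IsPreconnected R) :
    RcoF (isotropicSet R) ⊆ isotropicSet R := by
  intro ξ hξ
  have hdet := det_nonneg_of_mem_rcoF_isotropicSet hξ
  have hsplit := det_eq_sq_norm_sub_sq_norm ξ
  by_contra hnot
  rw [mem_isotropicSet_iff, and_iff_left hdet] at hnot
  obtain ⟨k, hk⟩ | ⟨k, hk⟩ := exists_slope_sub_lt_or_exists_slope_add_lt hRc hcone hR hconn
    (sub_nonneg.mpr (det_nonneg_iff_norm_le.mp hdet))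
    (by linarith [norm_nonneg (conformalSplit ξ).2]) hnot
  · have := two_mul_norm_snd_add_lt_of_mem_rcoF (k := -k)
      (c := 2 * ‖(conformalSplit ξ).2‖ - k * ξ.det) hRc (fun p hp ↦ ?_) hξ
    · linarith
    · linear_combination hk p hp + k * hsplit
  · have := two_mul_norm_fst_add_lt_of_mem_rcoF (k := -k)
      (c := 2 * ‖(conformalSplit ξ).1‖ - k * ξ.det) hRc (fun p hp ↦ ?_) hξ
    · linarith
    · linear_combination hk p hp + k * hsplit

theorem isClosed_singularValueCone : IsClosed singularValueCone :=
  (isClosed_le continuous_const continuous_fst).inter (isClosed_le continuous_fst continuous_snd)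

theorem RankOneConvexFun.continuous_diagonal {f : Mat 2 2 → ℝ} (hf : RankOneConvexFun f) :
    Continuous fun p : ℝ × ℝ ↦ f (Matrix.diagonal ![p.1, p.2]) := by
  refine continuous_uncurry_of_convexOn_of_continuous (g := fun x y ↦ f (Matrix.diagonal ![x, y]))
    hf.convexOn_diagonal_left fun x ↦ ?_
  exact continuousOn_univ.mp ((hf.convexOn_diagonal_right x).continuousOn isOpen_univ)

theorem isClosed_reducedSet_rcoF (E : Set (Mat 2 2)) : IsClosed (reducedSet (RcoF E)) := by
  have hinter : reducedSet (RcoF E) = singularValueCone ∩ ⋂ (f : Mat 2 2 → ℝ)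
      (_ : RankOneConvexFun f) (_ : ∀ η ∈ E, f η ≤ 0),
        {p | f (Matrix.diagonal ![p.1, p.2]) ≤ 0} := by
    ext p
    simp [reducedSet, RcoF]
  rw [hinter]
  exact isClosed_singularValueCone.inter <| isClosed_iInter fun _ ↦ isClosed_iInter fun hf ↦
    isClosed_iInter fun _ ↦ isClosed_le hf.continuous_diagonal continuous_const

theorem isCompact_reducedSet_rcoF (hΛ : IsCompact Λ) :
    IsCompact (reducedSet (RcoF (isotropicSet Λ))) := by
  obtain ⟨C, hC⟩ : ∃ C : ℝ, ∀ p ∈ Λ, p.1 + p.2 < C := by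
    obtain ⟨C, hC⟩ := hΛ.bddAbove_image (f := fun p ↦ p.1 + p.2) (by fun_prop)
    exact ⟨C + 1, fun p hp ↦ (hC (mem_image_of_mem _ hp)).trans_lt (lt_add_one C)⟩
  refine isCompact_Icc.of_isClosed_subset (isClosed_reducedSet_rcoF _)
    (s := Icc ((0 : ℝ), (0 : ℝ)) (C, C)) fun p ⟨⟨hp₁, hp₁₂⟩, hp⟩ ↦ ?_
  have hnorm := two_mul_norm_fst_add_lt_of_mem_rcoF (k := 0) hΛ (by simpa using hC) hp
  rw [(norm_conformalSplit_diagonal hp₁ hp₁₂).1] at hnorm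
  exact ⟨⟨hp₁, hp₁.trans hp₁₂⟩, ⟨by linarith, by linarith⟩⟩

theorem subset_reducedSet_rcoF (hΛ : Λ ⊆ singularValueCone) :
    Λ ⊆ reducedSet (RcoF (isotropicSet Λ)) := fun _ hp ↦
  ⟨hΛ hp, subset_rcoF _ ((diagonal_mem_isotropicSet_iff (hΛ hp).1 (hΛ hp).2).mpr hp)⟩

theorem isotropicSet_reducedSet_rcoF (Λ : Set (ℝ × ℝ)) :
    isotropicSet (reducedSet (RcoF (isotropicSet Λ))) = RcoF (isotropicSet Λ) :=
  isotropicSet_reducedSet (isIsotropic_isotropicSet Λ).rcoF fun _ ↦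
    det_nonneg_of_mem_rcoF_isotropicSet

end Hull

theorem stmt10 (ΛE : Set (ℝ × ℝ)) (hΛc : IsCompact ΛE)
    (hΛ : ΛE ⊆ {p : ℝ × ℝ | 0 ≤ p.1 ∧ p.1 ≤ p.2})
    (RΛ : Set (ℝ × ℝ))
    (hRΛ : IsLeast {S : Set (ℝ × ℝ) | IsCompact S ∧
      S ⊆ {p : ℝ × ℝ | 0 ≤ p.1 ∧ p.1 ≤ p.2} ∧ ΛE ⊆ S ∧
      RankOneConvexSet {ξ : Mat 2 2 |
        (singularValues ξ 0, singularValues ξ 1) ∈ S ∧ 0 ≤ ξ.det}} RΛ)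
    (hconn : IsConnected RΛ)
    (E : Set (Mat 2 2))
    (hE : E = {ξ : Mat 2 2 | (singularValues ξ 0, singularValues ξ 1) ∈ ΛE ∧ 0 ≤ ξ.det}) :
    RcoF E = {ξ : Mat 2 2 | (singularValues ξ 0, singularValues ξ 1) ∈ RΛ ∧ 0 ≤ ξ.det} := by
  subst hE
  change RcoF (isotropicSet ΛE) = isotropicSet RΛ
  obtain ⟨⟨hRc, hcone, hΛR, hR⟩, hleast⟩ := hRΛ
  refine Subset.antisymm ?_ ?_
  · exact (rcoF_mono (isotropicSet_mono hΛR)).trans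
      (rcoF_isotropicSet_subset hRc hcone hR hconn.isPreconnected)
  · have heq := isotropicSet_reducedSet_rcoF ΛE
    have hconvex : RankOneConvexSet (isotropicSet (reducedSet (RcoF (isotropicSet ΛE)))) := by
      rw [heq]
      exact rankOneConvexSet_rcoF _
    have hmin : RΛ ⊆ reducedSet (RcoF (isotropicSet ΛE)) :=
      hleast ⟨isCompact_reducedSet_rcoF hΛc, fun _ hp ↦ hp.1, subset_reducedSet_rcoF hΛ, hconvex⟩
    exact (isotropicSet_mono hmin).trans heq.subset

end Statements
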